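/- For every convex body K in ℝ^d, the Hadwiger number H(K) (the maximum number of non-overlapping translates of K all touching K) satisfies H(K) ≤ 3^d − 1, with equality if and only if K is an affine image of the d-cube. -/

import Mathlib

open scoped Classical Pointwise

noncomputable section

/-- `K` admits `m` non-overlapping translates all touching `K`: there are translates
`c₁+K, …, c_m+K`, pairwise non-overlapping, each non-overlapping with `K` and meeting
`K`. -/
def HasHadwigerConfig {d : ℕ} (K : Set (EuclideanSpace ℝ (Fin d))) (m : ℕ) : Prop :=
  ∃ c : Fin m → EuclideanSpace ℝ (Fin d),
    (∀ i, Disjoint (interior (c i +ᵥ K)) (interior K) ∧ ((c i +ᵥ K) ∩ K).Nonempty) ∧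
    ∀ i j, i ≠ j → Disjoint (interior (c i +ᵥ K)) (interior (c j +ᵥ K))

/-- `K` is an affine image of the `d`-cube. -/
def IsAffineCube {d : ℕ} (K : Set (EuclideanSpace ℝ (Fin d))) : Prop :=
  ∃ f : EuclideanSpace ℝ (Fin d) ≃ᵃ[ℝ] EuclideanSpace ℝ (Fin d),
    K = f '' {x | ∀ i, x i ∈ Set.Icc (0 : ℝ) 1}


/-- Symmetric convex body `D` such that `3D` is covered by separated translates `s + D`. -/
structure HadTile {E : Type*} [NormedAddCommGroup E] [NormedSpace ℝ E] (D S : Set E) : Prop where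
  conv : Convex ℝ D
  comp : IsCompact D
  symm : ∀ x ∈ D, -x ∈ D
  fin : S.Finite
  half : ∀ s ∈ S, (1 / 2 : ℝ) • s ∈ D
  cover : ∀ x ∈ D, ∃ s ∈ S, (3 : ℝ) • x - s ∈ D
  sep : ∀ s ∈ S, ∀ t ∈ S, s ≠ t → ∀ l : ℝ, 1 < l → (l / 2) • (s - t) ∉ D

namespace HadTile

variable {E : Type*} [NormedAddCommGroup E] [NormedSpace ℝ E] {D S : Set E}

theorem half_sub (h : HadTile D S) {x y : E} (hx : x ∈ D) (hy : y ∈ D) :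
    (1 / 2 : ℝ) • (x - y) ∈ D := by
  have := h.conv hx (h.symm y hy) (by norm_num : (0:ℝ) ≤ 1/2) (by norm_num : (0:ℝ) ≤ 1/2)
    (by norm_num)
  convert this using 1
  module

theorem ext_cover (h : HadTile D S) {F : Set E} (hF : IsExtreme ℝ D F) {x s : E} (hx : x ∈ F)
    (hs : s ∈ S) (hxs : (3 : ℝ) • x - s ∈ D) :
    (1 / 2 : ℝ) • s ∈ F ∧ (3 : ℝ) • x - s ∈ F := by
  have hz : x ∈ openSegment ℝ ((1 / 2 : ℝ) • s) ((3 : ℝ) • x - s) :=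
    ⟨2/3, 1/3, by norm_num, by norm_num, by norm_num, by module⟩
  exact ⟨hF.left_mem_of_mem_openSegment (h.half s hs) hxs hx hz,
    hF.right_mem_of_mem_openSegment (h.half s hs) hxs hx hz⟩

theorem mem_seg_iff {e u x : E} :
    x ∈ segment ℝ e (e + u) ↔ ∃ t : ℝ, 0 ≤ t ∧ t ≤ 1 ∧ x = e + t • u := by
  rw [segment_eq_image']
  constructor
  · rintro ⟨t, ⟨h0, h1⟩, rfl⟩
    exact ⟨t, h0, h1, by simp⟩
  · rintro ⟨t, h0, h1, rfl⟩
    exact ⟨t, ⟨h0, h1⟩, by simp⟩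

/-- structure of centers on an edge -/
theorem edge (h : HadTile D S) {e u : E} (hu : u ≠ 0)
    (hF : IsExtreme ℝ D (segment ℝ e (e + u))) :
    (∀ s ∈ S, (1 / 2 : ℝ) • s ∈ segment ℝ e (e + u) →
      s = (2 : ℝ) • e ∨ s = (2 : ℝ) • e + u ∨ s = (2 : ℝ) • e + (2 : ℝ) • u) ∧
    (∀ l : ℝ, 1 < l → (l / 2) • u ∉ D) := by
  have he : e ∈ D := hF.subset (left_mem_segment ℝ _ _)
  have he' : e + u ∈ D := hF.subset (right_mem_segment ℝ _ _)
  have hu2 : (1 / 2 : ℝ) • u ∈ D := by simpa using h.half_sub he' he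
  have hu2' : (1 / 2 : ℝ) • (-u) ∈ D := by simpa using h.half_sub he he'
  have sepT : ∀ t t' : ℝ, (2 : ℝ) • e + t • u ∈ S → (2 : ℝ) • e + t' • u ∈ S → t < t' →
      t + 1 ≤ t' := by
    intro t t' ht ht' hlt
    by_contra hc
    push Not at hc
    have hd : 0 < t' - t := by linarith
    refine h.sep _ ht' _ ht ?_ (1 / (t' - t)) ?_ ?_
    · intro heq
      have : (t' - t) • u = 0 := by
        have := sub_eq_zero.2 heq
        rw [← this]; module
      rcases smul_eq_zero.1 this with h1 | h1
      · linarith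
      · exact hu h1
    · rw [lt_div_iff₀ hd]; linarith
    · convert hu2 using 1
      have : (2 : ℝ) • e + t' • u - ((2 : ℝ) • e + t • u) = (t' - t) • u := by module
      rw [this, smul_smul]
      congr 1
      field_simp
  have param : ∀ s ∈ S, (1 / 2 : ℝ) • s ∈ segment ℝ e (e + u) →
      ∃ t : ℝ, 0 ≤ t ∧ t ≤ 2 ∧ s = (2 : ℝ) • e + t • u := by
    intro s _ hs
    obtain ⟨t, h0, h1, h2⟩ := mem_seg_iff.1 hs
    refine ⟨2 * t, by linarith, by linarith, ?_⟩
    have : s = (2 : ℝ) • ((1 / 2 : ℝ) • s) := by module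
    rw [this, h2]; module
  have inj : ∀ a b : ℝ, e + a • u = e + b • u → a = b := by
    intro a b hab
    exact smul_left_injective ℝ hu (add_left_cancel hab)
  have cov : ∀ x : ℝ, 0 ≤ x → x ≤ 3 → ∃ t : ℝ, 0 ≤ t ∧ t ≤ 2 ∧ (2 : ℝ) • e + t • u ∈ S ∧
      t ≤ x ∧ x ≤ t + 1 := by
    intro x hx0 hx3
    have hx : e + (x / 3) • u ∈ segment ℝ e (e + u) :=
      mem_seg_iff.2 ⟨x / 3, by linarith, by linarith, rfl⟩
    obtain ⟨s, hs, hsD⟩ := h.cover _ (hF.subset hx)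
    obtain ⟨h1, h2⟩ := h.ext_cover hF hx hs hsD
    obtain ⟨t, ht0, ht2, rfl⟩ := param s hs h1
    obtain ⟨r, hr0, hr1, hr⟩ := mem_seg_iff.1 h2
    have : x - t = r := inj _ _ (by rw [← hr]; module)
    exact ⟨t, ht0, ht2, hs, by linarith, by linarith⟩
  have h0 : (2 : ℝ) • e + (0 : ℝ) • u ∈ S := by
    obtain ⟨t, ht0, ht2, hs, h1, h2⟩ := cov 0 le_rfl (by norm_num)
    rwa [show (0 : ℝ) = t by linarith]
  have h2 : (2 : ℝ) • e + (2 : ℝ) • u ∈ S := by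
    obtain ⟨t, ht0, ht2, hs, h1, h2⟩ := cov 3 (by norm_num) le_rfl
    rwa [show (2 : ℝ) = t by linarith] at hs ⊢
  have tri : ∀ t : ℝ, 0 ≤ t → t ≤ 2 → (2 : ℝ) • e + t • u ∈ S → t = 0 ∨ t = 1 ∨ t = 2 := by
    intro t ht0 ht2 hs
    rcases ht0.eq_or_lt with h' | h'
    · exact Or.inl h'.symm
    rcases ht2.eq_or_lt with h'' | h''
    · exact Or.inr (Or.inr h'')
    have := sepT 0 t h0 hs h'
    have := sepT t 2 hs h2 h''
    exact Or.inr (Or.inl (by linarith))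
  have h1 : (2 : ℝ) • e + (1 : ℝ) • u ∈ S := by
    obtain ⟨t, ht0, ht2, hs, h1, h2⟩ := cov (3 / 2) (by norm_num) (by norm_num)
    rcases tri t ht0 ht2 hs with rfl | rfl | rfl
    · linarith
    · exact hs
    · linarith
  constructor
  · intro s hs hsF
    obtain ⟨t, ht0, ht2, rfl⟩ := param s hs hsF
    rcases tri t ht0 ht2 hs with rfl | rfl | rfl
    · left; simp
    · right; left; simp
    · right; right; rfl
  · intro l hl
    have := h.sep _ h1 _ h0 (by simpa using hu) l hl
    simpa using this

/-- local prism structure along an edge -/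
theorem edge_local (h : HadTile D S) {e u : E} (hu : u ≠ 0)
    (hF : IsExtreme ℝ D (segment ℝ e (e + u))) {p : E} (hp : p ∈ D) :
    ∃ ε a : ℝ, 0 < ε ∧ ε ≤ 1 ∧ -1 ≤ a ∧ a ≤ 0 ∧ e + ε • (p - e) + a • u ∈ D ∧
      e + ε • (p - e) + (a + 1) • u ∈ D := by
  obtain ⟨hS3, hlen⟩ := h.edge hu hF
  have he : e ∈ D := hF.subset (left_mem_segment ℝ _ _)
  have he' : e + u ∈ D := hF.subset (right_mem_segment ℝ _ _)
  set R : Set E := {s ∈ S | (1 / 2 : ℝ) • s ∉ segment ℝ e (e + u)} with hR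
  have hRfin : R.Finite := h.fin.subset (fun s hs => hs.1)
  set Z : Set E := ⋃ s ∈ R, (fun x => x - s) ⁻¹' D with hZ
  have hZc : IsClosed Z := hRfin.isClosed_biUnion fun s _ =>
    h.comp.isClosed.preimage (by fun_prop)
  set G : Set E := (fun x : E => (3 : ℝ) • x) '' segment ℝ e (e + u) with hG
  have hGc : IsCompact G := by
    apply IsCompact.image _ (by fun_prop)
    rw [segment_eq_image']
    exact isCompact_Icc.image (by fun_prop)
  have hGZ : G ⊆ Zᶜ := by
    rintro _ ⟨x, hx, rfl⟩ hxZ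
    simp only [hZ, Set.mem_iUnion, Set.mem_preimage] at hxZ
    obtain ⟨s, hs, hsx⟩ := hxZ
    exact hs.2 (h.ext_cover hF hx hs.1 hsx).1
  obtain ⟨δ, hδ, hth⟩ := hGc.exists_thickening_subset_open hZc.isOpen_compl hGZ
  set w := p - e with hw
  obtain ⟨ε, hε0, hε1, hεδ⟩ : ∃ ε : ℝ, 0 < ε ∧ ε ≤ 1 ∧ ε * ‖w‖ < δ := by
    refine ⟨min 1 (δ / (2 * (‖w‖ + 1))), by positivity, min_le_left _ _, ?_⟩
    have hn := norm_nonneg w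
    calc min 1 (δ / (2 * (‖w‖ + 1))) * ‖w‖ ≤ δ / (2 * (‖w‖ + 1)) * ‖w‖ := by
          gcongr; exact min_le_right _ _
      _ < δ := by
        rw [div_mul_eq_mul_div, div_lt_iff₀ (by positivity)]
        nlinarith
  set q := e + ε • w with hq
  have hqD : q ∈ D := by
    have := h.conv he hp (by linarith : 0 ≤ 1 - ε) hε0.le (by ring)
    convert this using 1
    rw [hq, hw]; module
  set C : Set ℝ := {t : ℝ | q + t • u ∈ D} with hC
  have hC0 : (0 : ℝ) ∈ C := by simpa [hC] using hqD
  have hdiff : ∀ t ∈ C, ∀ t' ∈ C, t' - t ≤ 1 := by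
    intro t ht t' ht'
    by_contra hc
    push Not at hc
    apply hlen _ hc
    convert h.half_sub ht' ht using 1
    module
  have hCcl : IsClosed C := h.comp.isClosed.preimage (by fun_prop)
  have hCcomp : IsCompact C := by
    refine isCompact_Icc.of_isClosed_subset hCcl (s := Set.Icc (-1) 1) ?_
    intro t ht
    have := hdiff t ht 0 hC0
    have := hdiff 0 hC0 t ht
    constructor <;> linarith
  obtain ⟨a, haC, ha⟩ := hCcomp.exists_isLeast ⟨0, hC0⟩
  obtain ⟨b, hbC, hb⟩ := hCcomp.exists_isGreatest ⟨0, hC0⟩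
  have ha0 : a ≤ 0 := ha hC0
  have hb0 : 0 ≤ b := hb hC0
  have hab := hdiff a haC b hbC
  have hab1 : b = a + 1 := by
    by_contra hne
    have hlt : b < a + 1 := lt_of_le_of_ne (by linarith) hne
    set t := (a + b + 1) / 2 with ht
    have htb : b < t := by rw [ht]; linarith
    have hta : t < a + 1 := by rw [ht]; linarith
    -- the point X
    set X := (2 : ℝ) • e + q + t • u with hX
    have hX3 : (1 / 3 : ℝ) • X ∈ D := by
      have h1 : (1 / 3 : ℝ) • ((2 : ℝ) • e + (q + a • u)) ∈ D := by
        have := h.conv he haC (by norm_num : (0:ℝ) ≤ 2/3) (by norm_num : (0:ℝ) ≤ 1/3) (by norm_num)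
        convert this using 1; module
      have h2 : (1 / 3 : ℝ) • ((2 : ℝ) • e + u + (q + b • u)) ∈ D := by
        have h3 : (1/2 : ℝ) • e + (1/2 : ℝ) • (e + u) ∈ D :=
          h.conv he he' (by norm_num) (by norm_num) (by norm_num)
        have := h.conv h3 hbC (by norm_num : (0:ℝ) ≤ 2/3) (by norm_num : (0:ℝ) ≤ 1/3) (by norm_num)
        convert this using 1; module
      have := h.conv h1 h2 (by norm_num : (0:ℝ) ≤ 1/2) (by norm_num : (0:ℝ) ≤ 1/2) (by norm_num)
      convert this using 1
      rw [hX, ht]; module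
    obtain ⟨s, hs, hsD⟩ := h.cover _ hX3
    have hsX : X - s ∈ D := by
      convert hsD using 2; module
    have hXZ : X ∉ Z := by
      apply hth
      rw [Metric.mem_thickening_iff]
      refine ⟨(3 : ℝ) • (e + (t / 3) • u), ⟨_, mem_seg_iff.2 ⟨t / 3, by linarith, by linarith, rfl⟩, rfl⟩, ?_⟩
      rw [dist_eq_norm]
      have : X - (3 : ℝ) • (e + (t / 3) • u) = ε • w := by rw [hX, hq]; module
      rw [this, norm_smul, Real.norm_of_nonneg hε0.le]
      exact hεδ
    have hsF : (1 / 2 : ℝ) • s ∈ segment ℝ e (e + u) := by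
      by_contra hc
      apply hXZ
      simp only [hZ, Set.mem_iUnion, Set.mem_preimage]
      exact ⟨s, ⟨hs, hc⟩, hsX⟩
    rcases hS3 s hs hsF with rfl | rfl | rfl
    · have : t ∈ C := by
        show q + t • u ∈ D
        convert hsX using 1; rw [hX]; module
      have := hb this
      linarith
    · have : t - 1 ∈ C := by
        show q + (t - 1) • u ∈ D
        convert hsX using 1; rw [hX]; module
      have := ha this
      linarith
    · have : t - 2 ∈ C := by
        show q + (t - 2) • u ∈ D
        convert hsX using 1; rw [hX]; module
      have := ha this
      linarith
  refine ⟨ε, a, hε0, hε1, by linarith, ha0, haC, ?_⟩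
  rw [← hab1]; exact hbC

/-- `x` is a nonnegative combination of the vectors in `N`. -/
def InCone (N : Finset E) (x : E) : Prop :=
  ∃ c : E → ℝ, (∀ w ∈ N, 0 ≤ c w) ∧ x = ∑ w ∈ N, c w • w

/-- `g` is a feasible direction of `D` at `q`. -/
def Feas (D : Set E) (q g : E) : Prop :=
  ∃ r : ℝ, 0 < r ∧ ∀ ε : ℝ, 0 ≤ ε → ε ≤ r → q + ε • g ∈ D

theorem Feas.of_mem (hD : Convex ℝ D) {q g : E} (hq : q ∈ D) {r : ℝ} (hr : 0 < r)
    (h : q + r • g ∈ D) : Feas D q g := by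
  refine ⟨r, hr, fun ε h0 h1 => ?_⟩
  have hle : ε / r ≤ 1 := (div_le_one hr).2 h1
  have := hD hq h (by linarith : 0 ≤ 1 - ε / r) (by positivity : 0 ≤ ε / r) (by ring)
  convert this using 1
  have : ε = (ε / r) * r := by field_simp
  conv_lhs => rw [this]
  module

theorem Feas.zero {q : E} (hq : q ∈ D) : Feas D q 0 :=
  ⟨1, one_pos, fun ε _ _ => by simpa using hq⟩

theorem Feas.add (hD : Convex ℝ D) {q g k : E} (hg : Feas D q g) (hk : Feas D q k) :
    Feas D q (g + k) := by
  obtain ⟨r, hr, h⟩ := hg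
  obtain ⟨r', hr', h'⟩ := hk
  refine ⟨min r r' / 2, by positivity, fun ε h0 h1 => ?_⟩
  have := min_le_left r r'
  have := min_le_right r r'
  have := hD (h (2 * ε) (by linarith) (by linarith)) (h' (2 * ε) (by linarith) (by linarith))
    (by norm_num : (0:ℝ) ≤ 1/2) (by norm_num : (0:ℝ) ≤ 1/2) (by norm_num)
  convert this using 1
  module

theorem Feas.smul {q g : E} (hq : q ∈ D) (hg : Feas D q g) {c : ℝ} (hc : 0 ≤ c) :
    Feas D q (c • g) := by
  rcases hc.eq_or_lt with rfl | hc
  · simpa using Feas.zero hq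
  obtain ⟨r, hr, h⟩ := hg
  refine ⟨r / c, by positivity, fun ε h0 h1 => ?_⟩
  rw [smul_smul]
  exact h _ (by positivity) ((le_div_iff₀ hc).1 h1)

theorem Feas.sum (hD : Convex ℝ D) {q : E} (hq : q ∈ D) {ι : Type*} (s : Finset ι) (f : ι → E)
    (c : ι → ℝ) (hc : ∀ i ∈ s, 0 ≤ c i) (hf : ∀ i ∈ s, Feas D q (f i)) :
    Feas D q (∑ i ∈ s, c i • f i) := by
  induction s using Finset.induction_on with
  | empty => simpa using Feas.zero hq
  | insert a s ha ih =>
    rw [Finset.sum_insert ha]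
    refine Feas.add hD (Feas.smul hq (hf a (by simp)) (hc a (by simp))) (ih ?_ ?_)
    · intro i hi; exact hc i (by simp [hi])
    · intro i hi; exact hf i (by simp [hi])

theorem ext_center (h : HadTile D S) {e : E} (he : e ∈ D.extremePoints ℝ) : (2 : ℝ) • e ∈ S := by
  have hF : IsExtreme ℝ D {e} := isExtreme_singleton.2 he
  obtain ⟨s, hs, hsD⟩ := h.cover e he.1
  have := (h.ext_cover hF (Set.mem_singleton e) hs hsD).1
  rw [Set.mem_singleton_iff] at this
  rw [← this, smul_smul]
  norm_num
  exact hs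

theorem ext_finite (h : HadTile D S) : (D.extremePoints ℝ).Finite := by
  have : Set.InjOn (fun e : E => (2 : ℝ) • e) (D.extremePoints ℝ) :=
    (smul_right_injective E (two_ne_zero' ℝ)).injOn
  exact Set.Finite.of_finite_image (h.fin.subset (by rintro _ ⟨e, he, rfl⟩; exact h.ext_center he)) this

theorem eq_hull [FiniteDimensional ℝ E] (h : HadTile D S) :
    D = convexHull ℝ (D.extremePoints ℝ) := by
  have h1 := closure_convexHull_extremePoints h.comp h.conv
  rw [(h.ext_finite.isCompact_convexHull ℝ).isClosed.closure_eq] at h1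
  exact h1.symm

theorem vertex [FiniteDimensional ℝ E] (h : HadTile D S) (hne : D.Nonempty) :
    ∃ e ∈ D, ∃ N : Finset E, (∀ w ∈ N, w ≠ 0 ∧ IsExtreme ℝ D (segment ℝ e (e + w))) ∧
      (∀ x ∈ D, InCone N (x - e)) ∧
      (∀ v ∈ N, ∀ y : E → ℝ, (∀ w ∈ N, 0 ≤ y w) → ∀ τ : ℝ, τ • v = ∑ w ∈ N, y w • w →
        ∀ w ∈ N, w ≠ v → y w = 0) := by
  obtain ⟨e, he⟩ := h.comp.extremePoints_nonempty hne
  have hfin := h.ext_finite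
  set V := hfin.toFinset with hV
  set N0 : Finset E := (V.erase e).image (fun v => v - e) with hN0
  have hN0mem : ∀ w ∈ N0, w ≠ 0 ∧ e + w ∈ D.extremePoints ℝ := by
    intro w hw
    simp only [hN0, Finset.mem_image, Finset.mem_erase, hV, Set.Finite.mem_toFinset] at hw
    obtain ⟨v, ⟨hv1, hv2⟩, rfl⟩ := hw
    exact ⟨sub_ne_zero.2 hv1, by simpa using hv2⟩
  have hcone0 : ∀ x ∈ D, InCone N0 (x - e) := by
    intro x hx
    rw [h.eq_hull] at hx
    have hx' : x ∈ convexHull ℝ (V : Set E) := by simpa [hV] using hx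
    obtain ⟨c, hc0, hc1, rfl⟩ := Finset.mem_convexHull'.1 hx'
    refine ⟨fun w => c (e + w), ?_, ?_⟩
    · intro w hw
      exact hc0 _ (by simpa [hV] using (hN0mem w hw).2)
    · rw [hN0, Finset.sum_image (by intro a _ b _ hab; simpa using hab)]
      simp only [add_sub_cancel]
      have heV : e ∈ V := by simpa [hV] using he
      have : ∑ v ∈ V, c v • (v - e) = ∑ v ∈ V, c v • v - e := by
        simp only [smul_sub, Finset.sum_sub_distrib, ← Finset.sum_smul, hc1, one_smul]
      rw [← this, ← Finset.add_sum_erase V _ heV]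
      simp
  -- pointedness
  have hpt : ∀ c : E → ℝ, (∀ w ∈ N0, 0 ≤ c w) → ∑ w ∈ N0, c w • w = 0 → ∀ w ∈ N0, c w = 0 := by
    intro c hc hsum
    by_contra hcon
    push Not at hcon
    obtain ⟨w0, hw0, hcw0⟩ := hcon
    have hpos : 0 < ∑ w ∈ N0, c w :=
      Finset.sum_pos' hc ⟨w0, hw0, lt_of_le_of_ne (hc w0 hw0) (Ne.symm hcw0)⟩
    have hmem : N0.centerMass c (fun w => e + w) ∈ convexHull ℝ (D \ {e}) := by
      apply Finset.centerMass_mem_convexHull _ hc hpos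
      intro w hw
      exact ⟨(hN0mem w hw).2.1, by simpa using (hN0mem w hw).1⟩
    have heq : N0.centerMass c (fun w => e + w) = e := by
      rw [Finset.centerMass]
      simp only [smul_add, Finset.sum_add_distrib, ← Finset.sum_smul, hsum, add_zero, smul_smul]
      rw [inv_mul_cancel₀ hpos.ne', one_smul]
    rw [heq] at hmem
    exact (h.conv.mem_extremePoints_iff_mem_sdiff_convexHull_sdiff.1 he).2 hmem
  -- minimal generating set
  obtain ⟨N, hN, hmin⟩ := Finset.exists_min_image
    (N0.powerset.filter (fun M => ∀ x ∈ D, InCone M (x - e))) Finset.card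
    ⟨N0, by simpa using hcone0⟩
  rw [Finset.mem_filter, Finset.mem_powerset] at hN
  obtain ⟨hNsub, hNcone⟩ := hN
  have hptN : ∀ c : E → ℝ, (∀ w ∈ N, 0 ≤ c w) → ∑ w ∈ N, c w • w = 0 → ∀ w ∈ N, c w = 0 := by
    intro c hc hsum w hw
    have := hpt (fun w => if w ∈ N then c w else 0)
      (by intro w _; split_ifs with hh; exacts [hc w hh, le_rfl])
      (by
        rw [← hsum]
        simp only [ite_smul, zero_smul]
        rw [← Finset.sum_filter]
        congr 1
        ext w; simp only [Finset.mem_filter]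
        exact ⟨fun h => h.2, fun h => ⟨hNsub h, h⟩⟩) w (hNsub hw)
    simpa [hw] using this
  have hM : ∀ v ∈ N, ∀ y : E → ℝ, (∀ w ∈ N, 0 ≤ y w) → ∀ τ : ℝ, τ • v = ∑ w ∈ N, y w • w →
        ∀ w ∈ N, w ≠ v → y w = 0 := by
    intro v hv y hy τ hτ
    rw [← Finset.add_sum_erase N _ hv] at hτ
    have hτ' : (τ - y v) • v = ∑ w ∈ N.erase v, y w • w := by
      rw [sub_smul, hτ]; abel
    rcases lt_or_ge 0 (τ - y v) with hlt | hge
    · exfalso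
      have hmem : N.erase v ∈ N0.powerset.filter (fun M => ∀ x ∈ D, InCone M (x - e)) := by
        rw [Finset.mem_filter, Finset.mem_powerset]
        refine ⟨(Finset.erase_subset _ _).trans hNsub, ?_⟩
        intro x hx
        obtain ⟨c, hc0, hc⟩ := hNcone x hx
        refine ⟨fun w => c w + c v * (τ - y v)⁻¹ * y w, ?_, ?_⟩
        · intro w hw
          have h1 := hc0 w (Finset.mem_of_mem_erase hw)
          have h2 := hy w (Finset.mem_of_mem_erase hw)
          have h3 := hc0 v hv
          positivity
        · rw [hc, ← Finset.add_sum_erase N _ hv]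
          simp only [add_smul, Finset.sum_add_distrib]
          rw [add_comm]
          congr 1
          simp only [mul_smul]
          rw [← Finset.smul_sum, ← Finset.smul_sum, ← hτ', smul_smul (τ - y v)⁻¹,
            inv_mul_cancel₀ hlt.ne', one_smul]
      have := hmin _ hmem
      have := Finset.card_erase_lt_of_mem hv
      omega
    · have hz := hptN (fun w => if w = v then y v - τ else y w)
        (by intro w hw; split_ifs; exacts [by linarith, hy w hw])
        (by
          rw [← Finset.add_sum_erase N _ hv]
          have : ∑ w ∈ N.erase v, (if w = v then y v - τ else y w) • w
              = ∑ w ∈ N.erase v, y w • w := by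
            apply Finset.sum_congr rfl
            intro w hw
            rw [if_neg (Finset.ne_of_mem_erase hw)]
          rw [this, ← hτ', if_pos rfl]
          module)
      intro w hw hwv
      simpa [hwv] using hz w hw
  refine ⟨e, he.1, N, ?_, hNcone, hM⟩
  intro v hv
  obtain ⟨hv0, hvext⟩ := hN0mem v (hNsub hv)
  refine ⟨hv0, h.conv.segment_subset he.1 hvext.1, ?_⟩
  rintro x hx y hy z hz ⟨α, β, hα, hβ, hαβ, hzz⟩
  obtain ⟨τ, hτ0, hτ1, rfl⟩ := mem_seg_iff.1 hz
  obtain ⟨cx, hcx0, hcx⟩ := hNcone x hx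
  obtain ⟨cy, hcy0, hcy⟩ := hNcone y hy
  have hzero := hM v hv (fun w => α * cx w + β * cy w)
    (by
      intro w hw
      have := hcx0 w hw
      have := hcy0 w hw
      positivity) τ
    (by
      simp only [add_smul, Finset.sum_add_distrib, mul_smul]
      rw [← Finset.smul_sum, ← Finset.smul_sum, ← hcx, ← hcy]
      have h1 : τ • v = α • x + β • y - (α + β) • e := by rw [hzz, hαβ]; module
      rw [h1]; module)
  have hxv : x - e = cx v • v := by
    rw [hcx, ← Finset.add_sum_erase N _ hv, Finset.sum_eq_zero, add_zero]
    intro w hw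
    have hwN := Finset.mem_of_mem_erase hw
    have h1 := hzero w hwN (Finset.ne_of_mem_erase hw)
    have h2 := hcx0 w hwN
    have h3 := hcy0 w hwN
    have : cx w = 0 := by
      have h4 : 0 ≤ β * cy w := by positivity
      have h5 : 0 ≤ α * cx w := by positivity
      have h6 : α * cx w = 0 := by linarith
      rcases mul_eq_zero.1 h6 with h7 | h7
      · linarith
      · exact h7
    rw [this, zero_smul]
  refine mem_seg_iff.2 ⟨cx v, hcx0 v hv, ?_, by rw [← hxv]; abel⟩
  by_contra hc
  push Not at hc
  have hk : 0 < cx v := by linarith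
  have : e + v ∈ openSegment ℝ e x := by
    refine ⟨1 - (cx v)⁻¹, (cx v)⁻¹, ?_, by positivity, by ring, ?_⟩
    · have := inv_lt_one_of_one_lt₀ hc
      linarith
    · have hx' : x = e + cx v • v := by rw [← hxv]; abel
      have h2 : (cx v)⁻¹ • x = (cx v)⁻¹ • e + v := by
        rw [hx', smul_add, smul_smul, inv_mul_cancel₀ hk.ne', one_smul]
      rw [h2]; module
  have := hvext.2 he.1 hx this
  exact hv0 (by simpa using this)

/-- the edges at a vertex form a linearly independent family. -/
theorem lin_indep [FiniteDimensional ℝ E] (h : HadTile D S) {e : E} (he : e ∈ D) {N : Finset E}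
    (hN1 : ∀ w ∈ N, w ≠ 0 ∧ IsExtreme ℝ D (segment ℝ e (e + w)))
    (hN2 : ∀ x ∈ D, InCone N (x - e))
    (hN3 : ∀ v ∈ N, ∀ y : E → ℝ, (∀ w ∈ N, 0 ≤ y w) → ∀ τ : ℝ, τ • v = ∑ w ∈ N, y w • w →
        ∀ w ∈ N, w ≠ v → y w = 0) :
    ∀ c : E → ℝ, ∑ w ∈ N, c w • w = 0 → ∀ w ∈ N, c w = 0 := by
  have hmem : ∀ w ∈ N, e + w ∈ D := fun w hw => (hN1 w hw).2.subset (right_mem_segment ℝ _ _)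
  have hfe : ∀ w ∈ N, Feas D e w := fun w hw =>
    Feas.of_mem h.conv he one_pos (by simpa using hmem w hw)
  have hfi : ∀ v ∈ N, ∀ w ∈ N, w ≠ v → Feas D (e + v) w := by
    intro v hv w hw hwv
    obtain ⟨ε, a, hε0, hε1, ha1, ha0, hD1, hD2⟩ :=
      h.edge_local (hN1 v hv).1 (hN1 v hv).2 (hmem w hw)
    have haz : a = 0 := by
      obtain ⟨x, hx0, hx⟩ := hN2 _ hD1
      have := hN3 w hw (fun k => x k + (if k = v then -a else 0))
        (by
          intro k hk
          have := hx0 k hk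
          split_ifs <;> linarith) ε
        (by
          simp only [add_smul, Finset.sum_add_distrib]
          rw [← hx]
          simp only [ite_smul, zero_smul, Finset.sum_ite_eq', hv, if_true]
          rw [add_sub_cancel_left]
          module) v hv (Ne.symm hwv)
      simp only [if_true] at this
      have := hx0 v hv
      linarith
    subst haz
    apply Feas.of_mem h.conv (hmem v hv) hε0
    convert hD2 using 1
    module
  have key : ∀ c : E → ℝ, ∑ w ∈ N, c w • w = 0 → ∀ v ∈ N, ¬ 0 < c v := by
    intro c hc v hv hpos
    have hA : Feas D e (∑ w ∈ N.erase v, (c w)⁺ • w) :=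
      Feas.sum h.conv he _ _ _ (fun i _ => posPart_nonneg _)
        (fun i hi => hfe i (Finset.mem_of_mem_erase hi))
    have hB : Feas D (e + v) (∑ w ∈ N.erase v, (c w)⁻ • w) :=
      Feas.sum h.conv (hmem v hv) _ _ _ (fun i _ => negPart_nonneg _)
        (fun i hi => hfi v hv i (Finset.mem_of_mem_erase hi) (Finset.ne_of_mem_erase hi))
    have hrel : ∑ w ∈ N.erase v, (c w)⁻ • w = c v • v + ∑ w ∈ N.erase v, (c w)⁺ • w := by
      rw [← Finset.add_sum_erase N _ hv] at hc
      have : ∑ w ∈ N.erase v, c w • w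
          = ∑ w ∈ N.erase v, (c w)⁺ • w - ∑ w ∈ N.erase v, (c w)⁻ • w := by
        rw [← Finset.sum_sub_distrib]
        apply Finset.sum_congr rfl
        intro w _
        rw [← sub_smul, posPart_sub_negPart]
      rw [this] at hc
      rw [eq_comm, ← sub_eq_zero, ← hc]
      abel
    rw [hrel] at hB
    obtain ⟨r, hr, hA⟩ := hA
    obtain ⟨r', hr', hB⟩ := hB
    have h1 := hA (min r r') (by positivity) (min_le_left _ _)
    have h2 := hB (min r r') (by positivity) (min_le_right _ _)
    have hm : 0 < min r r' := by positivity
    refine (h.edge (hN1 v hv).1 (hN1 v hv).2).2 (1 + min r r' * c v) ?_ ?_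
    · have := mul_pos hm hpos
      linarith
    · convert h.half_sub h2 h1 using 1
      module
  intro c hc w hw
  have h1 := key c hc w hw
  have h2 := key (fun w => - c w) (by simp [hc]) w hw
  linarith

theorem exists_basis [FiniteDimensional ℝ E] (h : HadTile D S) (hint : (interior D).Nonempty)
    {d : ℕ} (hd : Module.finrank ℝ E = d) :
    ∃ e ∈ D, ∃ b : Module.Basis (Fin d) ℝ E, (∀ i, e + b i ∈ D) ∧
      (∀ i, ∀ l : ℝ, 1 < l → (l / 2) • b i ∉ D) ∧ ∀ x ∈ D, ∀ i, 0 ≤ b.repr (x - e) i := by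
  obtain ⟨e, he, N, hN1, hN2, hN3⟩ := h.vertex (hint.mono interior_subset)
  have hli := h.lin_indep he hN1 hN2 hN3
  have hli' : LinearIndepOn ℝ (id : E → E) (N : Set E) := by
    rw [linearIndepOn_finset_iff]
    exact hli
  have hsp : Submodule.span ℝ (N : Set E) = ⊤ := by
    apply Submodule.eq_top_of_nonempty_interior'
    obtain ⟨x0, hx0⟩ := hint
    refine ⟨x0 - e, ?_⟩
    rw [mem_interior]
    refine ⟨(fun y => y + e) ⁻¹' interior D, ?_, isOpen_interior.preimage (by fun_prop), by simpa using hx0⟩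
    intro y hy
    obtain ⟨c, _, hc⟩ := hN2 _ (interior_subset hy)
    rw [add_sub_cancel_right] at hc
    rw [hc]
    exact Submodule.sum_mem _ fun w hw => Submodule.smul_mem _ _ (Submodule.subset_span hw)
  have hli2 : LinearIndependent ℝ (fun x : N => (x : E)) := hli'
  let B : Module.Basis N ℝ E := Module.Basis.mk hli2 (by
    rw [← hsp]; apply Submodule.span_mono; intro x hx; exact ⟨⟨x, hx⟩, rfl⟩)
  have hcard : Fintype.card N = d := by rw [← hd, Module.finrank_eq_card_basis B]
  let eqv : N ≃ Fin d := Fintype.equivFinOfCardEq hcard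
  have hB : ∀ i : N, B i = (i : E) := fun i => by simp [B]
  have hb : ∀ i, B.reindex eqv i = (eqv.symm i : E) := fun i => by
    rw [Module.Basis.reindex_apply, hB]
  refine ⟨e, he, B.reindex eqv, ?_, ?_, ?_⟩
  · intro i
    rw [hb]
    exact (hN1 _ (eqv.symm i).2).2.subset (right_mem_segment ℝ _ _)
  · intro i
    rw [hb]
    exact (h.edge (hN1 _ (eqv.symm i).2).1 (hN1 _ (eqv.symm i).2).2).2
  · intro x hx i
    obtain ⟨c, hc0, hc⟩ := hN2 x hx
    have : x - e = ∑ i : N, c i • B i := by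
      rw [hc, ← Finset.sum_coe_sort]
      exact Finset.sum_congr rfl fun i _ => by rw [hB]
    rw [this, Module.Basis.repr_reindex_apply, Module.Basis.repr_sum_self]
    exact hc0 _ (eqv.symm i).2

theorem le_one [FiniteDimensional ℝ E] (h : HadTile D S) {d : ℕ} {e : E} (he : e ∈ D)
    {b : Module.Basis (Fin d) ℝ E} (hb1 : ∀ i, e + b i ∈ D)
    (hb2 : ∀ i, ∀ l : ℝ, 1 < l → (l / 2) • b i ∉ D)
    (hb3 : ∀ x ∈ D, ∀ i, 0 ≤ b.repr (x - e) i) :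
    ∀ x ∈ D, ∀ i, b.repr (x - e) i ≤ 1 := by
  set a : Fin d → ℝ := fun i => b.repr (-e - e) i with ha
  have ha0 : ∀ i, 0 ≤ a i := fun i => hb3 _ (h.symm e he) i
  have hasum : ∑ i, a i • b i = -e - e := b.sum_repr _
  have ha1 : ∀ i, a i ≤ 1 := by
    intro i
    by_contra hc
    push Not at hc
    obtain ⟨r, hr, hf⟩ : Feas D e (∑ j ∈ Finset.univ.erase i, a j • b j) :=
      Feas.sum h.conv he _ _ _ (fun j _ => ha0 j)
        (fun j _ => Feas.of_mem h.conv he one_pos (by simpa using hb1 j))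
    rw [← Finset.add_sum_erase _ _ (Finset.mem_univ i)] at hasum
    set ε := min r 1 with hε
    have hε0 : 0 < ε := by positivity
    have h1 := hf ε hε0.le (min_le_left _ _)
    have h2 := h.conv (hb1 i) (h.symm e he) (by linarith [min_le_right r 1] : 0 ≤ 1 - ε) hε0.le
      (by ring)
    refine hb2 i (1 - ε + ε * a i) (by nlinarith) ?_
    convert h.half_sub h2 h1 using 1
    have : -e = e + (a i • b i + ∑ j ∈ Finset.univ.erase i, a j • b j) := by
      rw [hasum]; abel
    rw [this]
    module
  intro x hx i
  have h1 := hb3 _ (h.symm x hx) i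
  have h2 : x - e = -(-x - e) + (-e - e) := by abel
  rw [h2, map_add, map_neg, Finsupp.add_apply, Finsupp.neg_apply]
  have := ha1 i
  simp only [ha] at this
  linarith

theorem seg_ext (hD : Convex ℝ D) {d : ℕ} {e : E} {b : Module.Basis (Fin d) ℝ E}
    (hb3 : ∀ x ∈ D, ∀ i, 0 ≤ b.repr (x - e) i) (hb4 : ∀ x ∈ D, ∀ i, b.repr (x - e) i ≤ 1)
    {I : Finset (Fin d)} {i : Fin d} (hi : i ∉ I) (hq : e + ∑ j ∈ I, b j ∈ D) {l : ℝ}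
    (hl : 0 < l) (hql : e + ∑ j ∈ I, b j + l • b i ∈ D)
    (hmax : ∀ m : ℝ, e + ∑ j ∈ I, b j + m • b i ∈ D → m ≤ l) :
    IsExtreme ℝ D (segment ℝ (e + ∑ j ∈ I, b j) (e + ∑ j ∈ I, b j + l • b i)) := by
  refine ⟨hD.segment_subset hq hql, ?_⟩
  rintro x hx y hy z hz ⟨α, β, hα, hβ, hαβ, rfl⟩
  obtain ⟨t, ht0, ht1, ht⟩ := mem_seg_iff.1 hz
  have hrI : ∀ k, b.repr (∑ j ∈ I, b j) k = if k ∈ I then 1 else 0 := by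
    intro k
    rw [map_sum, Finsupp.finsetSum_apply]
    simp [Finsupp.single_apply]
  have hco : ∀ k, k ≠ i → b.repr (x - e) k = if k ∈ I then 1 else 0 := by
    intro k hk
    have h1 : α • (x - e) + β • (y - e) = ∑ j ∈ I, b j + (t * l) • b i := by
      have : α • (x - e) + β • (y - e) = α • x + β • y - (α + β) • e := by module
      rw [this, ht, hαβ]; module
    have h2 := congrArg (fun v => b.repr v k) h1
    simp only [map_add, map_smul, Finsupp.add_apply, Finsupp.smul_apply, hrI, smul_eq_mul,
      Module.Basis.repr_self, Finsupp.single_apply, if_neg (Ne.symm hk), mul_zero, add_zero] at h2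
    have := hb3 x hx k
    have := hb4 x hx k
    have := hb3 y hy k
    have := hb4 y hy k
    split_ifs at h2 ⊢ <;> nlinarith
  have hx2 : x = e + ∑ j ∈ I, b j + (b.repr (x - e) i) • b i := by
    have : x - e = ∑ j ∈ I, b j + (b.repr (x - e) i) • b i := by
      apply b.repr.injective
      ext k
      rw [map_add, map_smul, Finsupp.add_apply, Finsupp.smul_apply, hrI, Module.Basis.repr_self]
      by_cases hk : k = i
      · subst hk; simp [hi]
      · rw [hco k hk]; simp [Ne.symm hk]
    rw [add_assoc, ← this]; abel
  have hm := hmax _ (hx2 ▸ hx)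
  refine mem_seg_iff.2 ⟨b.repr (x - e) i / l, div_nonneg (hb3 x hx i) hl.le, (div_le_one hl).2 hm, ?_⟩
  rw [smul_smul, div_mul_cancel₀ _ hl.ne']
  exact hx2

theorem verts (h : HadTile D S) {d : ℕ} {e : E} (he : e ∈ D)
    {b : Module.Basis (Fin d) ℝ E} (hb1 : ∀ i, e + b i ∈ D)
    (hb3 : ∀ x ∈ D, ∀ i, 0 ≤ b.repr (x - e) i) (hb4 : ∀ x ∈ D, ∀ i, b.repr (x - e) i ≤ 1) :
    ∀ n : ℕ, ∀ I : Finset (Fin d), I.card = n → e + ∑ j ∈ I, b j ∈ D := by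
  have hrI : ∀ (I : Finset (Fin d)) k, b.repr (∑ j ∈ I, b j) k = if k ∈ I then 1 else 0 := by
    intro I k
    rw [map_sum, Finsupp.finsetSum_apply]
    simp [Finsupp.single_apply]
  have hcoord : ∀ (I : Finset (Fin d)) (i : Fin d), i ∉ I → ∀ m : ℝ,
      e + ∑ j ∈ I, b j + m • b i ∈ D → m ≤ 1 := by
    intro I i hi m hm
    have := hb4 _ hm i
    rw [add_assoc, add_sub_cancel_left, map_add, map_smul, Finsupp.add_apply, Finsupp.smul_apply,
      hrI] at this
    simpa [hi] using this
  intro n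
  induction n using Nat.strong_induction_on with
  | _ n ih =>
    intro I hI
    rcases I.eq_empty_or_nonempty with rfl | ⟨i, hi⟩
    · simpa using he
    set J := I.erase i with hJ
    have hiJ : i ∉ J := by simp [hJ]
    have hIJ : ∑ j ∈ I, b j = ∑ j ∈ J, b j + b i := by rw [hJ, Finset.sum_erase_add _ _ hi]
    have hJc : J.card < n := by rw [← hI]; exact Finset.card_erase_lt_of_mem hi
    have hJD := ih _ hJc J rfl
    rw [hIJ, ← add_assoc]
    -- some positive amount is feasible
    have hpos : ∃ l : ℝ, 0 < l ∧ e + ∑ j ∈ J, b j + l • b i ∈ D := by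
      rcases J.eq_empty_or_nonempty with hJe | ⟨k, hk⟩
      · exact ⟨1, one_pos, by simpa [hJe] using hb1 i⟩
      set L := J.erase k with hL
      have hkL : k ∉ L := by simp [hL]
      have hJL : ∑ j ∈ J, b j = ∑ j ∈ L, b j + b k := by rw [hL, Finset.sum_erase_add _ _ hk]
      have hLc : L.card < J.card := Finset.card_erase_lt_of_mem hk
      have hLD := ih _ (hLc.trans hJc) L rfl
      have hiL : i ∉ L := fun hh => hiJ (Finset.mem_of_mem_erase hh)
      have hki : k ≠ i := by rintro rfl; exact hiJ hk
      have hLi : e + ∑ j ∈ L, b j + b i ∈ D := by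
        have hc : (insert i L).card < n := by
          rw [Finset.card_insert_of_notMem hiL]; omega
        have := ih _ hc (insert i L) rfl
        rw [Finset.sum_insert hiL] at this
        convert this using 1; abel
      have hLk : e + ∑ j ∈ L, b j + (1 : ℝ) • b k ∈ D := by
        rw [one_smul, add_assoc, ← hJL]; exact hJD
      have hext := seg_ext h.conv hb3 hb4 hkL hLD one_pos hLk (hcoord L k hkL)
      rw [one_smul] at hext
      obtain ⟨ε, a, hε0, hε1, ha1, ha0, hD1, hD2⟩ := h.edge_local (b.ne_zero k) hext hLi
      have haz : a = 0 := by
        have := hb3 _ hD1 k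
        have h3 : e + ∑ j ∈ L, b j + ε • (e + ∑ j ∈ L, b j + b i - (e + ∑ j ∈ L, b j)) + a • b k - e
          = ∑ j ∈ L, b j + ε • b i + a • b k := by module
        rw [h3] at this
        simp only [map_add, map_smul, Finsupp.add_apply, Finsupp.smul_apply, hrI, smul_eq_mul,
          Module.Basis.repr_self, Finsupp.single_apply, if_neg (Ne.symm hki), hkL, if_false,
          if_true] at this
        linarith
      subst haz
      refine ⟨ε, hε0, ?_⟩
      rw [hJL]
      convert hD2 using 1
      module
    obtain ⟨l0, hl0, hl0D⟩ := hpos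
    set C : Set ℝ := {t : ℝ | 0 ≤ t ∧ e + ∑ j ∈ J, b j + t • b i ∈ D} with hC
    have hCc : IsCompact C := by
      refine isCompact_Icc.of_isClosed_subset (s := Set.Icc 0 1) ?_ ?_
      · exact isClosed_Ici.inter (h.comp.isClosed.preimage (by fun_prop))
      · intro t ht
        exact ⟨ht.1, hcoord J i hiJ t ht.2⟩
    obtain ⟨l, hlC, hl⟩ := hCc.exists_isGreatest ⟨l0, hl0.le, hl0D⟩
    have hl0' : 0 < l := lt_of_lt_of_le hl0 (hl ⟨hl0.le, hl0D⟩)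
    have hext := seg_ext h.conv hb3 hb4 hiJ hJD hl0' hlC.2 (by
      intro m hm
      rcases le_or_gt 0 m with h' | h'
      · exact hl ⟨h', hm⟩
      · linarith)
    have hlen := (h.edge (smul_ne_zero hl0'.ne' (b.ne_zero i)) hext).2
    have hl1 : l = 1 := by
      by_contra hne
      have hlt : l < 1 := lt_of_le_of_ne (hcoord J i hiJ l hlC.2) hne
      refine hlen (1 / l) (by rw [lt_div_iff₀ hl0']; linarith) ?_
      have := h.half_sub (hb1 i) he
      convert this using 1
      rw [add_sub_cancel_left, smul_smul]
      congr 1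
      field_simp
    have := hlC.2
    rwa [hl1, one_smul] at this

end HadTile

/-- A convex set containing all vertices of a parallelotope contains it. -/
theorem had_cube_subset {E : Type*} [NormedAddCommGroup E] [NormedSpace ℝ E] {K : Set E}
    (hK : Convex ℝ K) {d : ℕ} (b : Module.Basis (Fin d) ℝ E) (q : E)
    (hv : ∀ I : Finset (Fin d), q + ∑ j ∈ I, b j ∈ K) {x : E}
    (hx0 : ∀ i, 0 ≤ b.repr (x - q) i) (hx1 : ∀ i, b.repr (x - q) i ≤ 1) : x ∈ K := by
  have key : ∀ J I : Finset (Fin d), Disjoint I J →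
      q + ∑ j ∈ I, b j + ∑ j ∈ J, b.repr (x - q) j • b j ∈ K := by
    intro J
    induction J using Finset.induction_on with
    | empty => intro I _; simpa using hv I
    | insert k J hk ih =>
      intro I hI
      rw [Finset.disjoint_insert_right] at hI
      have h1 := ih I hI.2
      have h2 := ih (insert k I) (by rw [Finset.disjoint_insert_left]; exact ⟨hk, hI.2⟩)
      have := hK h1 h2 (sub_nonneg.2 (hx1 k)) (hx0 k) (by ring)
      rw [Finset.sum_insert hk]
      rw [Finset.sum_insert hI.1] at this
      convert this using 1
      module
  have := key Finset.univ ∅ (by simp)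
  rw [b.sum_repr] at this
  simpa using this

theorem HadTile.cube {E : Type*} [NormedAddCommGroup E] [NormedSpace ℝ E] {D S : Set E}
    [FiniteDimensional ℝ E] (h : HadTile D S) (hint : (interior D).Nonempty)
    {d : ℕ} (hd : Module.finrank ℝ E = d) :
    ∃ b : Module.Basis (Fin d) ℝ E, ∀ x, x ∈ D ↔ ∀ i, |b.repr x i| ≤ 1 / 2 := by
  obtain ⟨e, he, b, hb1, hb2, hb3⟩ := h.exists_basis hint hd
  have hb4 := h.le_one he hb1 hb2 hb3
  have hv := h.verts he hb1 hb3 hb4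
  have hec : ∀ i, b.repr e i = -1/2 := by
    intro i
    have h1 := hb4 _ (h.symm e he) i
    have h2 := hb3 _ (h.symm _ (hv _ Finset.univ rfl)) i
    simp only [map_sub, map_neg, map_add, map_sum, Finsupp.sub_apply, Finsupp.neg_apply,
      Finsupp.add_apply, Finsupp.finsetSum_apply, Module.Basis.repr_self, Finsupp.single_apply,
      Finset.sum_ite_eq', Finset.mem_univ, if_true] at h1 h2
    linarith
  refine ⟨b, fun x => ⟨fun hx i => ?_, fun hx => ?_⟩⟩
  · have h1 := hb3 x hx i
    have h2 := hb4 x hx i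
    rw [map_sub, Finsupp.sub_apply, hec] at h1 h2
    rw [abs_le]; constructor <;> linarith
  · refine had_cube_subset h.conv b e (fun I => hv _ I rfl) ?_ ?_
    · intro i
      have := abs_le.1 (hx i)
      rw [map_sub, Finsupp.sub_apply, hec]; linarith
    · intro i
      have := abs_le.1 (hx i)
      rw [map_sub, Finsupp.sub_apply, hec]; linarith

theorem had_affineCube_of_basis {d : ℕ} {K : Set (EuclideanSpace ℝ (Fin d))}
    (b : Module.Basis (Fin d) ℝ (EuclideanSpace ℝ (Fin d))) (q : EuclideanSpace ℝ (Fin d))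
    (hK : ∀ x, x ∈ K ↔ ∀ i, b.repr (x - q) i ∈ Set.Icc (0 : ℝ) 1) : IsAffineCube K := by
  refine ⟨((WithLp.linearEquiv 2 ℝ (Fin d → ℝ)).trans b.equivFun.symm).toAffineEquiv.trans
    (AffineEquiv.constVAdd ℝ _ q), ?_⟩
  ext x
  rw [hK]
  constructor
  · intro h
    refine ⟨WithLp.toLp 2 (fun i => b.repr (x - q) i), h, ?_⟩
    simp only [AffineEquiv.trans_apply, LinearEquiv.coe_toAffineEquiv, LinearEquiv.trans_apply,
      AffineEquiv.constVAdd_apply, WithLp.coe_linearEquiv, vadd_eq_add]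
    rw [Module.Basis.equivFun_symm_apply, b.sum_repr]
    abel
  · rintro ⟨y, hy, rfl⟩ i
    simp only [AffineEquiv.trans_apply, LinearEquiv.coe_toAffineEquiv, LinearEquiv.trans_apply,
      AffineEquiv.constVAdd_apply, WithLp.coe_linearEquiv, vadd_eq_add, add_sub_cancel_left]
    rw [Module.Basis.equivFun_symm_apply, b.repr_sum_self]
    exact hy i

theorem had_cube_of_diff {d : ℕ} {K : Set (EuclideanSpace ℝ (Fin d))} (hKc : Convex ℝ K)
    (b : Module.Basis (Fin d) ℝ (EuclideanSpace ℝ (Fin d)))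
    (hD : ∀ x, (∃ k ∈ K, ∃ k' ∈ K, x = k - k') ↔ ∀ i, |b.repr x i| ≤ 1) : IsAffineCube K := by
  have hsgn : ∀ I : Finset (Fin d), ∃ k ∈ K, ∃ k' ∈ K, ∀ i,
      b.repr (k - k') i = if i ∈ I then 1 else -1 := by
    intro I
    obtain ⟨k, hk, k', hk', h⟩ := (hD (∑ i, (if i ∈ I then (1 : ℝ) else -1) • b i)).2 (by
      intro i
      rw [b.repr_sum_self]
      split_ifs <;> simp)
    exact ⟨k, hk, k', hk', fun i => by rw [← h, b.repr_sum_self]⟩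
  have hdiff : ∀ k ∈ K, ∀ k' ∈ K, ∀ i, b.repr k i - b.repr k' i ≤ 1 := by
    intro k hk k' hk' i
    have := (abs_le.1 ((hD (k - k')).1 ⟨k, hk, k', hk', rfl⟩ i)).2
    simpa using this
  obtain ⟨p, hp, q, hq, hpq⟩ := hsgn Finset.univ
  refine had_affineCube_of_basis b q fun x => ⟨fun hx i => ?_, fun hx => ?_⟩
  · have h1 := hdiff x hx q hq i
    have h2 := hdiff p hp x hx i
    have h3 := hpq i
    simp only [map_sub, Finsupp.sub_apply, Finset.mem_univ, if_true] at h3 ⊢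
    constructor <;> linarith
  · refine had_cube_subset hKc b q (fun I => ?_) (fun i => (hx i).1) (fun i => (hx i).2)
    obtain ⟨k, hk, k', hk', hkk⟩ := hsgn I
    have : k = q + ∑ j ∈ I, b j := by
      rw [← sub_eq_iff_eq_add']
      apply b.repr.injective
      ext i
      rw [map_sum, Finsupp.finsetSum_apply]
      have h1 := hdiff k hk q hq i
      have h2 := hdiff p hp k hk i
      have h1' := hdiff k' hk' q hq i
      have h2' := hdiff p hp k' hk' i
      have h3 := hpq i
      have h4 := hkk i
      simp only [map_sub, Finsupp.sub_apply, Finset.mem_univ, if_true] at h3 h4 ⊢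
      simp only [Module.Basis.repr_self, Finsupp.single_apply, Finset.sum_ite_eq']
      split_ifs at h4 ⊢ <;> linarith
    exact this ▸ hk

theorem had_config_of_cube {d : ℕ} {K : Set (EuclideanSpace ℝ (Fin d))}
    (h : IsAffineCube K) : HasHadwigerConfig K (3 ^ d - 1) := by
  obtain ⟨f, rfl⟩ := h
  set Q : Set (EuclideanSpace ℝ (Fin d)) := {x | ∀ i, x i ∈ Set.Icc (0 : ℝ) 1} with hQ
  set z0 : Fin d → Fin 3 := fun _ => 1 with hz0
  have hcard : Fintype.card {z : Fin d → Fin 3 // z ≠ z0} = 3 ^ d - 1 := by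
    rw [Fintype.card_subtype_compl]
    simp
  let eqv := (Fintype.equivFinOfCardEq hcard).symm
  let T : (Fin d → Fin 3) → EuclideanSpace ℝ (Fin d) :=
    fun z => WithLp.toLp 2 (fun i => ((z i : ℕ) : ℝ) - 1)
  have hT0 : T z0 = 0 := by
    ext i; simp [T, hz0]
  -- interior points
  have hint : ∀ (c : EuclideanSpace ℝ (Fin d)) (y : EuclideanSpace ℝ (Fin d)),
      y ∈ interior (f.linear c +ᵥ f '' Q) → ∀ i, c i < f.symm y i ∧ f.symm y i < c i + 1 := by
    intro c y hy i
    have himg : f.linear c +ᵥ f '' Q = f '' {x | ∀ i, x i ∈ Set.Icc (c i) (c i + 1)} := by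
      ext w
      constructor
      · rintro ⟨_, ⟨x, hx, rfl⟩, rfl⟩
        refine ⟨c + x, fun i => ?_, ?_⟩
        · have := hx i
          simp only [PiLp.add_apply, Set.mem_Icc] at this ⊢
          constructor <;> linarith
        · have := f.map_vadd x c
          simpa using this
      · rintro ⟨x, hx, rfl⟩
        refine ⟨f (x - c), ⟨x - c, fun i => ?_, rfl⟩, ?_⟩
        · have := hx i
          simp only [PiLp.sub_apply, Set.mem_Icc] at this ⊢
          constructor <;> linarith
        · have := f.map_vadd (x - c) c
          simpa using this.symm
    rw [himg] at hy
    let F := f.toHomeomorphOfFiniteDimensional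
    have hF : (f '' {x | ∀ i, x i ∈ Set.Icc (c i) (c i + 1)})
      = F '' {x | ∀ i, x i ∈ Set.Icc (c i) (c i + 1)} := rfl
    rw [hF, ← F.image_interior] at hy
    obtain ⟨x, hx, rfl⟩ := hy
    have hsy : f.symm (F x) = x := f.symm_apply_apply x
    rw [hsy]
    have hopen : IsOpenMap (fun x : EuclideanSpace ℝ (Fin d) => x i) := by
      apply LinearMap.isOpenMap_of_finiteDimensional
        (EuclideanSpace.proj i : EuclideanSpace ℝ (Fin d) →L[ℝ] ℝ).toLinearMap
      intro r
      exact ⟨EuclideanSpace.single i r, by simp⟩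
    have hsub : (fun x : EuclideanSpace ℝ (Fin d) => x i) ''
        interior {x | ∀ i, x i ∈ Set.Icc (c i) (c i + 1)} ⊆ interior (Set.Icc (c i) (c i + 1)) := by
      apply interior_maximal _ (hopen _ isOpen_interior)
      rintro _ ⟨w, hw, rfl⟩
      exact interior_subset hw i
    have := hsub ⟨x, hx, rfl⟩
    rw [interior_Icc] at this
    exact this
  have hdis : ∀ z z' : Fin d → Fin 3, z ≠ z' →
      Disjoint (interior (f.linear (T z) +ᵥ f '' Q)) (interior (f.linear (T z') +ᵥ f '' Q)) := by
    intro z z' hzz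
    rw [Set.disjoint_left]
    intro y hy hy'
    apply hzz
    funext i
    have h1 := hint _ _ hy i
    have h2 := hint _ _ hy' i
    simp only [T] at h1 h2
    have h3 : ((z i : ℕ) : ℝ) < (z' i : ℕ) + 1 := by linarith
    have h4 : ((z' i : ℕ) : ℝ) < (z i : ℕ) + 1 := by linarith
    apply Fin.ext
    have h3' : (z i : ℕ) < z' i + 1 := by exact_mod_cast h3
    have h4' : (z' i : ℕ) < z i + 1 := by exact_mod_cast h4
    omega
  refine ⟨fun i => f.linear (T (eqv i).1), fun i => ⟨?_, ?_⟩, fun i j hij => ?_⟩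
  · have := hdis (eqv i).1 z0 (eqv i).2
    rw [hT0, map_zero, zero_vadd] at this
    exact this
  · set z := (eqv i).1
    let x : EuclideanSpace ℝ (Fin d) := WithLp.toLp 2 (fun i => if z i = 0 then 1 else 0)
    refine ⟨f (T z + x), ⟨f x, ⟨x, ?_, rfl⟩, ?_⟩, ⟨T z + x, ?_, rfl⟩⟩
    · intro i
      simp only [x]
      split_ifs <;> simp
    · have := f.map_vadd x (T z)
      simpa using this.symm
    · intro i
      simp only [x, T, PiLp.add_apply]
      generalize z i = k
      fin_cases k <;> norm_num
  · apply hdis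
    intro hh
    exact hij (eqv.injective (Subtype.ext hh))

/-- half of the difference body -/
def hadDiff {d : ℕ} (K : Set (EuclideanSpace ℝ (Fin d))) : Set (EuclideanSpace ℝ (Fin d)) :=
  (fun p : EuclideanSpace ℝ (Fin d) × EuclideanSpace ℝ (Fin d) => (1 / 2 : ℝ) • (p.1 - p.2)) ''
    (K ×ˢ K)

theorem mem_hadDiff {d : ℕ} {K : Set (EuclideanSpace ℝ (Fin d))} {x : EuclideanSpace ℝ (Fin d)} :
    x ∈ hadDiff K ↔ ∃ k ∈ K, ∃ k' ∈ K, x = (1 / 2 : ℝ) • (k - k') := by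
  constructor
  · rintro ⟨⟨k, k'⟩, ⟨hk, hk'⟩, rfl⟩
    exact ⟨k, hk, k', hk', rfl⟩
  · rintro ⟨k, hk, k', hk', rfl⟩
    exact ⟨⟨k, k'⟩, ⟨hk, hk'⟩, rfl⟩

theorem hadDiff_convex {d : ℕ} {K : Set (EuclideanSpace ℝ (Fin d))} (hK : Convex ℝ K) :
    Convex ℝ (hadDiff K) := by
  intro x hx y hy a b ha hb hab
  obtain ⟨k, hk, k', hk', rfl⟩ := mem_hadDiff.1 hx
  obtain ⟨l, hl, l', hl', rfl⟩ := mem_hadDiff.1 hy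
  exact mem_hadDiff.2 ⟨_, hK hk hl ha hb hab, _, hK hk' hl' ha hb hab, by module⟩

theorem hadDiff_isOpen {d : ℕ} {K : Set (EuclideanSpace ℝ (Fin d))} (hK : IsOpen K) :
    IsOpen (hadDiff K) := by
  have : hadDiff K = (1 / 2 : ℝ) • (K - K) := by
    ext x
    rw [mem_hadDiff]
    constructor
    · rintro ⟨k, hk, k', hk', rfl⟩
      exact ⟨k - k', ⟨k, hk, k', hk', rfl⟩, rfl⟩
    · rintro ⟨_, ⟨k, hk, k', hk', rfl⟩, rfl⟩
      exact ⟨k, hk, k', hk', rfl⟩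
  rw [this]
  exact (hK.sub_left).smul₀ (by norm_num)

theorem hadDiff_closure {d : ℕ} {K : Set (EuclideanSpace ℝ (Fin d))} (hK : Convex ℝ K)
    (hint : (interior K).Nonempty) : hadDiff K ⊆ closure (hadDiff (interior K)) := by
  have h1 : K ⊆ closure (interior K) := by
    rw [hK.closure_interior_eq_closure_of_nonempty_interior hint]
    exact subset_closure
  have h2 : K ×ˢ K ⊆ closure (interior K ×ˢ interior K) := by
    rw [closure_prod_eq]
    exact Set.prod_mono h1 h1
  refine (Set.image_mono h2).trans ?_
  exact image_closure_subset_closure_image (by fun_prop)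

theorem hadDiff_scale {d : ℕ} {K : Set (EuclideanSpace ℝ (Fin d))} (hK : Convex ℝ K)
    (hint : (interior K).Nonempty) {x : EuclideanSpace ℝ (Fin d)} {l : ℝ} (hl : 1 < l)
    (hx : l • x ∈ hadDiff K) : x ∈ hadDiff (interior K) := by
  have hcl := hadDiff_closure hK hint hx
  have hop := hadDiff_isOpen (isOpen_interior (s := K))
  have hcv := hadDiff_convex hK.interior
  have h0 : (0 : EuclideanSpace ℝ (Fin d)) ∈ hadDiff (interior K) := by
    obtain ⟨k, hk⟩ := hint
    exact mem_hadDiff.2 ⟨k, hk, k, hk, by simp⟩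
  have h0' : (0 : EuclideanSpace ℝ (Fin d)) ∈ interior (hadDiff (interior K)) := by
    rwa [hop.interior_eq]
  have hl0 : 0 < l := by linarith
  have hinv : l⁻¹ < 1 := inv_lt_one_of_one_lt₀ hl
  have := hcv.combo_interior_closure_mem_interior h0' hcl (by linarith : 0 < 1 - l⁻¹)
    (by positivity : 0 ≤ l⁻¹) (by ring)
  rw [hop.interior_eq, smul_zero, zero_add, smul_smul, inv_mul_cancel₀ hl0.ne', one_smul] at this
  exact this

open MeasureTheory in
theorem had_main {d : ℕ} (K : Set (EuclideanSpace ℝ (Fin d))) (hKconv : Convex ℝ K)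
    (hKcomp : IsCompact K) (hKint : (interior K).Nonempty) (m : ℕ) (h : HasHadwigerConfig K m) :
    m + 1 ≤ 3 ^ d ∧ (m + 1 = 3 ^ d → ∃ S, HadTile (hadDiff K) S) := by
  obtain ⟨c, hc1, hc2⟩ := h
  let s : Option (Fin m) → EuclideanSpace ℝ (Fin d) := fun o => o.elim 0 c
  set D := hadDiff K with hD
  set U := hadDiff (interior K) with hU
  have hsep : ∀ i j, i ≠ j → ∀ k ∈ interior K, ∀ k' ∈ interior K, s i + k ≠ s j + k' := by
    intro i j hij k hk k' hk' heq
    have hm : ∀ (v : EuclideanSpace ℝ (Fin d)) k, k ∈ interior K → v + k ∈ interior (v +ᵥ K) := by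
      intro v k hk
      rw [interior_vadd]
      exact ⟨k, hk, rfl⟩
    rcases i with _ | i <;> rcases j with _ | j
    · exact hij rfl
    · have heq' : k = c j + k' := by simpa [s] using heq
      exact Set.disjoint_left.1 (hc1 j).1 (hm (c j) k' hk') (heq' ▸ hk)
    · have heq' : c i + k = k' := by simpa [s] using heq
      exact Set.disjoint_left.1 (hc1 i).1 (hm (c i) k hk) (heq' ▸ hk')
    · have heq' : c i + k = c j + k' := heq
      exact Set.disjoint_left.1 (hc2 i j (fun hh => hij (by rw [hh]))) (hm (c i) k hk)
        (heq' ▸ hm (c j) k' hk')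
  have hhalf : ∀ i, (1 / 2 : ℝ) • s i ∈ D := by
    intro i
    rcases i with _ | i
    · obtain ⟨k, hk⟩ := hKint
      exact mem_hadDiff.2 ⟨k, interior_subset hk, k, interior_subset hk, by simp [s]⟩
    · obtain ⟨_, ⟨k, hk, rfl⟩, hk'⟩ := (hc1 i).2
      refine mem_hadDiff.2 ⟨_, hk', k, hk, ?_⟩
      simp [s]
  have hDconv : Convex ℝ D := hadDiff_convex hKconv
  have hDcomp : IsCompact D := (hKcomp.prod hKcomp).image (by fun_prop)
  have hUD : U ⊆ D := Set.image_mono (Set.prod_mono interior_subset interior_subset)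
  have hUo : IsOpen U := hadDiff_isOpen isOpen_interior
  have hUc : Convex ℝ U := hadDiff_convex hKconv.interior
  have hUne : U.Nonempty := by
    obtain ⟨k, hk⟩ := hKint
    exact ⟨_, mem_hadDiff.2 ⟨k, hk, k, hk, rfl⟩⟩
  have hvol : volume D = volume U := by
    apply le_antisymm _ (measure_mono hUD)
    refine (measure_mono (hadDiff_closure hKconv hKint)).trans ?_
    rw [measure_closure_of_null_frontier (hUc.addHaar_frontier volume)]
  have hUpos : volume U ≠ 0 := (hUo.measure_pos volume hUne).ne'
  have hUfin : volume U ≠ ⊤ := hvol ▸ hDcomp.measure_lt_top.ne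
  have hdisj : Pairwise (Function.onFun Disjoint fun i => s i +ᵥ U) := by
    intro i j hij
    rw [Function.onFun, Set.disjoint_left]
    rintro x ⟨a, ha, rfl⟩ ⟨b, hb, hab⟩
    obtain ⟨k1, hk1, k2, hk2, rfl⟩ := mem_hadDiff.1 ha
    obtain ⟨k3, hk3, k4, hk4, rfl⟩ := mem_hadDiff.1 hb
    have hmid : ∀ x ∈ interior K, ∀ y ∈ interior K, (1/2 : ℝ) • x + (1/2 : ℝ) • y ∈ interior K :=
      fun x hx y hy => hKconv.interior hx hy (by norm_num) (by norm_num) (by norm_num)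
    refine hsep i j hij _ (hmid k1 hk1 k4 hk4) _ (hmid k3 hk3 k2 hk2) ?_
    simp only [vadd_eq_add] at hab
    have h1 : s i + ((1/2 : ℝ) • k1 + (1/2 : ℝ) • k4) - (s j + ((1/2 : ℝ) • k3 + (1/2 : ℝ) • k2))
      = (s i + (1 / 2 : ℝ) • (k1 - k2)) - (s j + (1 / 2 : ℝ) • (k3 - k4)) := by module
    rw [← sub_eq_zero, h1, hab, sub_self]
  have hsub : (⋃ i, s i +ᵥ U) ⊆ (3 : ℝ) • D := by
    apply Set.iUnion_subset
    rintro i _ ⟨a, ha, rfl⟩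
    refine ⟨(1 / 3 : ℝ) • (s i + a), ?_, by simp⟩
    have := hDconv (hhalf i) (hUD ha) (by norm_num : (0:ℝ) ≤ 2/3) (by norm_num : (0:ℝ) ≤ 1/3)
      (by norm_num)
    convert this using 1
    module
  have hvolU : volume (⋃ i, s i +ᵥ U) = ((m + 1 : ℕ) : ENNReal) * volume U := by
    rw [measure_iUnion hdisj (fun i => (hUo.vadd (s i)).measurableSet)]
    simp [measure_vadd, tsum_fintype]
  have hvol3 : volume ((3 : ℝ) • D) = ((3 ^ d : ℕ) : ENNReal) * volume U := by
    rw [Measure.addHaar_smul, hvol, finrank_euclideanSpace_fin, abs_of_nonneg (by positivity)]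
    congr 1
    rw [ENNReal.ofReal_pow (by norm_num)]
    simp
  have hle := measure_mono (μ := volume) hsub
  rw [hvolU, hvol3, ENNReal.mul_le_mul_iff_left hUpos hUfin] at hle
  refine ⟨by exact_mod_cast hle, fun heq => ⟨Set.range s, ?_⟩⟩
  have h3c : Convex ℝ ((3 : ℝ) • D) := hDconv.smul 3
  have h3cl : IsCompact ((3 : ℝ) • D) := hDcomp.smul 3
  have hfull : volume ((3 : ℝ) • D \ ⋃ i, s i +ᵥ U) = 0 := by
    rw [measure_sdiff hsub (isOpen_iUnion fun i => hUo.vadd (s i)).measurableSet.nullMeasurableSet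
      (by rw [hvolU]; exact ENNReal.mul_ne_top (by simp) hUfin), hvolU, hvol3, heq, tsub_self]
  have hclosed : IsClosed (⋃ i, s i +ᵥ D) := isClosed_iUnion_of_finite fun i =>
    (hDcomp.vadd (s i)).isClosed
  have hint3 : interior ((3 : ℝ) • D) ⊆ ⋃ i, s i +ᵥ D := by
    have hop : IsOpen (interior ((3 : ℝ) • D) \ ⋃ i, s i +ᵥ D) :=
      isOpen_interior.sdiff hclosed
    have hz : volume (interior ((3 : ℝ) • D) \ ⋃ i, s i +ᵥ D) = 0 := by
      refine measure_mono_null ?_ hfull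
      apply Set.sdiff_subset_sdiff interior_subset
      exact Set.iUnion_mono fun i => Set.vadd_set_mono hUD
    have := (hop.measure_eq_zero_iff volume).1 hz
    exact Set.sdiff_eq_empty.1 this
  have hne3 : (interior ((3 : ℝ) • D)).Nonempty := by
    refine ((hUne.smul_set (a := (3 : ℝ)))).mono ?_
    apply interior_maximal (Set.smul_set_mono hUD)
    exact hUo.smul₀ (by norm_num)
  have hcov : (3 : ℝ) • D ⊆ ⋃ i, s i +ᵥ D := by
    have h1 := h3c.closure_interior_eq_closure_of_nonempty_interior hne3
    rw [h3cl.isClosed.closure_eq] at h1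
    rw [← h1]
    exact closure_minimal hint3 hclosed
  refine ⟨hDconv, hDcomp, ?_, Set.finite_range s, ?_, ?_, ?_⟩
  · intro x hx
    obtain ⟨k, hk, k', hk', rfl⟩ := mem_hadDiff.1 hx
    exact mem_hadDiff.2 ⟨k', hk', k, hk, by module⟩
  · rintro _ ⟨i, rfl⟩
    exact hhalf i
  · intro x hx
    have := hcov (Set.smul_mem_smul_set hx)
    obtain ⟨i, a, ha, hi⟩ := Set.mem_iUnion.1 this
    refine ⟨s i, ⟨i, rfl⟩, ?_⟩
    rw [← hi]
    simpa using ha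
  · rintro _ ⟨i, rfl⟩ _ ⟨j, rfl⟩ hne l hl hmem
    have hij : i ≠ j := fun hh => hne (by rw [hh])
    have h1 : l • ((1 / 2 : ℝ) • (s i - s j)) ∈ D := by
      convert hmem using 1; module
    obtain ⟨k, hk, k', hk', hkk⟩ := mem_hadDiff.1 (hadDiff_scale hKconv hKint hl h1)
    have h2 : s i - s j = k - k' := smul_right_injective _ (by norm_num : (1/2 : ℝ) ≠ 0) hkk
    refine hsep i j hij k' hk' k hk ?_
    rw [sub_eq_sub_iff_add_eq_add] at h2
    rw [h2]; abel

/-- Hadwiger's theorem: the Hadwiger number of any convex body `K ⊆ ℝ^d` is at most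
`3^d - 1`, with equality if and only if `K` is an affine `d`-cube. -/
theorem hadwiger_number_bound (d : ℕ) (hd : 1 ≤ d)
    (K : Set (EuclideanSpace ℝ (Fin d))) (hKconv : Convex ℝ K) (hKcomp : IsCompact K)
    (hKint : (interior K).Nonempty) :
    (∀ m : ℕ, HasHadwigerConfig K m → m ≤ 3 ^ d - 1) ∧
      (HasHadwigerConfig K (3 ^ d - 1) ↔ IsAffineCube K) := by
  refine ⟨fun m hm => ?_, fun h => ?_, had_config_of_cube⟩
  · have := (had_main K hKconv hKcomp hKint m hm).1
    omega
  · have h3 : 3 ^ d - 1 + 1 = 3 ^ d := Nat.sub_add_cancel (Nat.one_le_pow _ _ (by norm_num))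
    obtain ⟨S, hS⟩ := (had_main K hKconv hKcomp hKint _ h).2 h3
    have hDint : (interior (hadDiff K)).Nonempty := by
      obtain ⟨k, hk⟩ := hKint
      refine ⟨_, interior_maximal
        (Set.image_mono (Set.prod_mono interior_subset interior_subset))
        (hadDiff_isOpen isOpen_interior) (mem_hadDiff.2 ⟨k, hk, k, hk, rfl⟩)⟩
    obtain ⟨b, hb⟩ := hS.cube hDint (finrank_euclideanSpace_fin (𝕜 := ℝ) (n := d))
    apply had_cube_of_diff hKconv b
    intro x
    have hx := hb ((1 / 2 : ℝ) • x)
    rw [mem_hadDiff] at hx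
    constructor
    · rintro ⟨k, hk, k', hk', rfl⟩ i
      have := hx.1 ⟨k, hk, k', hk', rfl⟩ i
      rw [map_smul, Finsupp.smul_apply, smul_eq_mul, abs_mul] at this
      norm_num at this ⊢
      linarith
    · intro hi
      obtain ⟨k, hk, k', hk', hkk⟩ := hx.2 (by
        intro i
        have := hi i
        rw [map_smul, Finsupp.smul_apply, smul_eq_mul, abs_mul]
        norm_num
        linarith)
      exact ⟨k, hk, k', hk', smul_right_injective _ (by norm_num : (1/2 : ℝ) ≠ 0) hkk⟩
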